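/- In a nilpotent Lie algebra L over ℚ, the Baker-Campbell-Hausdorff product makes L_0 (or L itself) into a group, with identity 0 and inverse x ↦ -x. -/

import Mathlib

namespace Paper

variable {L : Type*} [LieRing L] [LieAlgebra ℚ L]

/-- The right-nested iterated bracket of a word: `[x₁,[x₂,[…,xₙ]…]]`. -/
def wordBracket : List L → L
  | [] => 0
  | [a] => a
  | a :: rest => ⁅a, wordBracket rest⁆

/-- The Dynkin term `[x^{p₁} y^{q₁} ⋯ x^{pₙ} y^{qₙ}]` of the
Baker-Campbell-Hausdorff series. -/
def dynkinTerm (x y : L) (ps : List (ℕ × ℕ)) : L :=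
  wordBracket ((ps.map fun pq => List.replicate pq.1 x ++ List.replicate pq.2 y)).flatten

/-- The Dynkin coefficient
`(-1)^{n-1} / (n ⬝ Σᵢ(pᵢ+qᵢ) ⬝ ∏ᵢ pᵢ! qᵢ!)` of the Baker-Campbell-Hausdorff series
(zero on invalid index lists containing a pair `(0,0)`). -/
def dynkinCoeff (ps : List (ℕ × ℕ)) : ℚ :=
  if ps.all fun pq => 0 < pq.1 + pq.2 then
    (-1 : ℚ) ^ (ps.length - 1) /
      ((ps.length : ℚ) * (((ps.map fun pq => pq.1 + pq.2).sum : ℕ) : ℚ) *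
        (((ps.map fun pq => pq.1.factorial * pq.2.factorial).prod : ℕ) : ℚ))
  else 0

/-- The Baker-Campbell-Hausdorff product given by Dynkin's explicit formula.  In a
nilpotent Lie algebra with `lowerCentralSeries ℚ L L N = ⊥` all terms of bracket length
`≥ N` vanish, so the truncation below is the full (finite) BCH series. -/
noncomputable def bch (N : ℕ) (x y : L) : L :=
  ∑ n ∈ Finset.range N, ∑ f : Fin (n + 1) → Fin (N + 1) × Fin (N + 1),
    dynkinCoeff (List.ofFn fun i => (((f i).1 : ℕ), ((f i).2 : ℕ))) •
      dynkinTerm x y (List.ofFn fun i => (((f i).1 : ℕ), ((f i).2 : ℕ)))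

section ExpLog
open Polynomial

/-- The exponential series truncated after degree `N`. -/
noncomputable def expTrunc {R : Type*} [Ring R] [Algebra ℚ R] (N : ℕ) (a : R) : R :=
  ∑ k ∈ Finset.range (N + 1), ((k.factorial : ℚ)⁻¹) • a ^ k

/-- The series of `log (1 + a)` truncated after degree `N`. -/
noncomputable def logTrunc {R : Type*} [Ring R] [Algebra ℚ R] (N : ℕ) (a : R) : R :=
  ∑ k ∈ Finset.range N, ((-1 : ℚ) ^ k / (k + 1)) • a ^ (k + 1)

theorem map_expTrunc {R S : Type*} [Ring R] [Algebra ℚ R] [Ring S] [Algebra ℚ S]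
    (f : R →ₐ[ℚ] S) (N : ℕ) (a : R) : f (expTrunc N a) = expTrunc N (f a) := by
  simp [expTrunc]

theorem map_logTrunc {R S : Type*} [Ring R] [Algebra ℚ R] [Ring S] [Algebra ℚ S]
    (f : R →ₐ[ℚ] S) (N : ℕ) (a : R) : f (logTrunc N a) = logTrunc N (f a) := by
  simp [logTrunc]

theorem X_pow_succ_dvd_of_derivative {p : ℚ[X]} {N : ℕ} (h0 : p.coeff 0 = 0)
    (h : X ^ N ∣ derivative p) : X ^ (N + 1) ∣ p := by
  rw [X_pow_dvd_iff] at h ⊢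
  rintro (_ | d) hd
  · exact h0
  · have := h d (by omega)
    rw [coeff_derivative] at this
    have h2 : ((d : ℚ) + 1) ≠ 0 := by positivity
    simpa [h2] using this

theorem derivative_expTrunc_X (N : ℕ) :
    derivative (expTrunc N (X : ℚ[X])) =
      expTrunc N (X : ℚ[X]) - ((N.factorial : ℚ)⁻¹) • X ^ N := by
  simp only [expTrunc]
  rw [Finset.sum_range_succ, add_sub_cancel_right, derivative_add, derivative_sum,
    ← derivative_sum, ← derivative_add, ← Finset.sum_range_succ (fun k => ((k.factorial : ℚ)⁻¹) •
      (X : ℚ[X]) ^ k), Finset.sum_range_succ']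
  simp only [pow_zero, derivative_add, derivative_sum]
  simp only [derivative_smul, derivative_one, smul_zero, add_zero, derivative_X_pow]
  refine Finset.sum_congr rfl fun k _ => ?_
  rw [← smul_eq_C_mul, smul_smul, Nat.factorial_succ]
  congr 1
  have h2 : ((k : ℚ) + 1) ≠ 0 := by positivity
  have h3 : (k.factorial : ℚ) ≠ 0 := by positivity
  push_cast
  field_simp

theorem coeff_zero_expTrunc_X (N : ℕ) : (expTrunc N (X : ℚ[X])).coeff 0 = 1 := by
  simp [expTrunc, Finset.sum_range_succ', coeff_X_pow]

theorem X_pow_dvd_logTrunc_expTrunc (N : ℕ) :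
    X ^ (N + 1) ∣ logTrunc N (expTrunc N (X : ℚ[X]) - 1) - X := by
  have hc := coeff_zero_expTrunc_X N
  have hd := derivative_expTrunc_X N
  set e : ℚ[X] := expTrunc N X
  have hX : X ∣ e - 1 := by rw [X_dvd_iff]; simp [hc]
  apply X_pow_succ_dvd_of_derivative
  · simp [logTrunc, coeff_zero_eq_eval_zero] at hc ⊢
    simp [eval_finsetSum, hc]
  · have h1 : derivative (logTrunc N (e - 1)) =
        (∑ k ∈ Finset.range N, (1 - e) ^ k) * derivative e := by
      simp only [logTrunc, derivative_sum, derivative_smul, derivative_pow_succ, Finset.sum_mul]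
      refine Finset.sum_congr rfl fun k _ => ?_
      have h2 : ((k : ℚ) + 1) ≠ 0 := by positivity
      have h4 : (1 - e) ^ k = C ((-1) ^ k) * (e - 1) ^ k := by
        rw [C_pow, ← mul_pow]; congr 1; simp
      rw [h4, smul_eq_C_mul, derivative_sub, derivative_one, sub_zero, ← mul_assoc, ← mul_assoc,
        ← C_mul]
      congr 3
      field_simp
    have h2 : (∑ k ∈ Finset.range N, (1 - e) ^ k) * e = 1 - (1 - e) ^ N := by
      have := geom_sum_mul_neg (1 - e) N
      simpa using this
    have h3 : derivative (logTrunc N (e - 1) - X) =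
        - (1 - e) ^ N - (∑ k ∈ Finset.range N, (1 - e) ^ k) * C ((N.factorial : ℚ)⁻¹) * X ^ N := by
      rw [derivative_sub, h1, hd, mul_sub, h2, smul_eq_C_mul, derivative_X]
      ring
    rw [h3]
    refine dvd_sub ((dvd_neg).2 (pow_dvd_pow_of_dvd ?_ N)) (dvd_mul_left _ _)
    rw [← dvd_neg]; simpa using hX

theorem logTrunc_expTrunc {R : Type*} [Ring R] [Algebra ℚ R] {N : ℕ} {a : R}
    (ha : a ^ (N + 1) = 0) : logTrunc N (expTrunc N a - 1) = a := by
  obtain ⟨q, hq⟩ := X_pow_dvd_logTrunc_expTrunc N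
  have := congrArg (aeval a) hq
  rw [map_sub, map_logTrunc, map_sub, map_expTrunc, map_mul, map_pow, aeval_X, ha, zero_mul,
    map_one] at this
  exact sub_eq_zero.1 this

end ExpLog

section Conj

theorem exp_eq_expTrunc {R : Type*} [Ring R] [Algebra ℚ R] {N : ℕ} {a : R}
    (ha : a ^ (N + 1) = 0) : IsNilpotent.exp a = expTrunc N a :=
  IsNilpotent.exp_eq_sum ha

theorem exp_conj {R : Type*} [Ring R] [Algebra ℚ R] {a : R} (ha : IsNilpotent a) (b : R) :
    IsNilpotent.exp a * b * IsNilpotent.exp (-a) =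
      IsNilpotent.exp (LinearMap.mulLeft ℚ a - LinearMap.mulRight ℚ a) b := by
  obtain ⟨n, hn⟩ := ha
  have hn1 : a ^ (n + 1) = 0 := by rw [pow_succ, hn, zero_mul]
  have hna : (-a) ^ (n + 1) = 0 := by rw [neg_pow, hn1, mul_zero]
  have hL : (LinearMap.mulLeft ℚ a) ^ (n + 1) = 0 := by rw [LinearMap.pow_mulLeft, hn1]; simp
  have hR : (LinearMap.mulRight ℚ (-a)) ^ (n + 1) = 0 := by
    rw [LinearMap.pow_mulRight, hna]; simp
  have hc : Commute (LinearMap.mulLeft ℚ a) (LinearMap.mulRight ℚ (-a)) :=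
    LinearMap.commute_mulLeft_right (R := ℚ) a (-a)
  have hs : LinearMap.mulLeft ℚ a - LinearMap.mulRight ℚ a =
      LinearMap.mulLeft ℚ a + LinearMap.mulRight ℚ (-a) := by
    ext; simp [sub_eq_add_neg]
  rw [hs, IsNilpotent.exp_add_of_commute hc ⟨_, hL⟩ ⟨_, hR⟩,
    IsNilpotent.exp_eq_sum hL, IsNilpotent.exp_eq_sum hR, IsNilpotent.exp_eq_sum hn1,
    IsNilpotent.exp_eq_sum hna, Module.End.mul_apply]
  simp only [LinearMap.sum_apply, LinearMap.smul_apply, LinearMap.pow_mulLeft,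
    LinearMap.pow_mulRight, LinearMap.mulLeft_apply, LinearMap.mulRight_apply, Finset.sum_mul,
    mul_assoc, smul_mul_assoc, Finset.mul_sum, mul_smul_comm, Finset.smul_sum]
  rw [Finset.sum_comm]
  exact Finset.sum_congr rfl fun i _ => Finset.sum_congr rfl fun j _ => smul_comm _ _ _

theorem exp_conj_mem {R : Type*} [Ring R] [Algebra ℚ R] {a : R} (ha : IsNilpotent a)
    (S : Submodule ℚ R) (hS : ∀ s ∈ S, a * s - s * a ∈ S) {b : R} (hb : b ∈ S) :
    IsNilpotent.exp a * b * IsNilpotent.exp (-a) ∈ S := by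
  rw [exp_conj ha, IsNilpotent.exp, LinearMap.sum_apply]
  refine S.sum_mem fun k hk => S.smul_mem _ ?_
  clear hk
  induction k with
  | zero => simpa using hb
  | succ k ih =>
    rw [pow_succ', Module.End.mul_apply]
    exact hS _ ih

end Conj

section Filtration

/-- A multiplicative descending filtration of length `N` on an associative `ℚ`-algebra, together
with a derivation inducing multiplication by `n` on the `n`-th graded piece. -/
structure EulerFiltration (R : Type*) [Ring R] [Algebra ℚ R] (N : ℕ) where
  /-- The terms of the filtration. -/
  fil : ℕ → Submodule ℚ R
  fil_zero : fil 0 = ⊤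
  fil_antitone : Antitone fil
  fil_mul_mem : ∀ {m n : ℕ} {a b : R}, a ∈ fil m → b ∈ fil n → a * b ∈ fil (m + n)
  fil_last : fil (N + 1) = ⊥
  /-- The Euler derivation. -/
  euler : R →ₗ[ℚ] R
  euler_mul : ∀ a b, euler (a * b) = euler a * b + a * euler b
  euler_sub_mem : ∀ {n : ℕ} {a : R}, a ∈ fil n → euler a - (n : ℚ) • a ∈ fil (n + 1)

namespace EulerFiltration

variable {R : Type*} [Ring R] [Algebra ℚ R] {N : ℕ} (F : EulerFiltration R N)

theorem pow_mem {a : R} (ha : a ∈ F.fil 1) (k : ℕ) : a ^ k ∈ F.fil k := by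
  induction k with
  | zero => simp [F.fil_zero]
  | succ k ih => rw [pow_succ]; exact F.fil_mul_mem ih ha

theorem pow_eq_zero {a : R} (ha : a ∈ F.fil 1) : a ^ (N + 1) = 0 := by
  have := F.pow_mem ha (N + 1)
  rwa [F.fil_last, Submodule.mem_bot] at this

theorem isNilpotent {a : R} (ha : a ∈ F.fil 1) : IsNilpotent a := ⟨_, F.pow_eq_zero ha⟩

theorem mul_mem_right {n : ℕ} {a : R} (b : R) (ha : a ∈ F.fil n) : a * b ∈ F.fil n := by
  have : b ∈ F.fil 0 := by simp [F.fil_zero]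
  simpa using F.fil_mul_mem ha this

theorem euler_one : F.euler 1 = 0 := by
  have := F.euler_mul 1 1
  simpa using this

theorem euler_mem {n : ℕ} {a : R} (ha : a ∈ F.fil n) : F.euler a ∈ F.fil n := by
  have h := F.fil_antitone (Nat.le_succ n) (F.euler_sub_mem ha)
  simpa using (F.fil n).add_mem h ((F.fil n).smul_mem (n : ℚ) ha)

theorem add_pow_sub_pow_mem {n : ℕ} {a b : R} (ha : a ∈ F.fil 1) (hn : 1 ≤ n)
    (hb : b ∈ F.fil n) (k : ℕ) : (a + b) ^ (k + 1) - a ^ (k + 1) ∈ F.fil (n + k) := by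
  induction k with
  | zero => simpa using hb
  | succ k ih =>
    have hab : a + b ∈ F.fil 1 := (F.fil 1).add_mem ha (F.fil_antitone hn hb)
    have h1 : (a + b) ^ (k + 1 + 1) - a ^ (k + 1 + 1) =
        (a + b) * ((a + b) ^ (k + 1) - a ^ (k + 1)) + b * a ^ (k + 1) := by
      rw [pow_succ' _ (k + 1), pow_succ' a (k + 1)]; noncomm_ring
    rw [h1]
    refine Submodule.add_mem _ ?_ (F.fil_mul_mem hb (F.pow_mem ha _))
    have := F.fil_mul_mem hab ih
    rwa [show 1 + (n + k) = n + (k + 1) by ring] at this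

theorem exp_add_sub_mem {n : ℕ} {a b : R} (ha : a ∈ F.fil 1) (hn : 1 ≤ n)
    (hb : b ∈ F.fil n) :
    IsNilpotent.exp (a + b) - IsNilpotent.exp a - b ∈ F.fil (n + 1) := by
  have hab : a + b ∈ F.fil 1 := (F.fil 1).add_mem ha (F.fil_antitone hn hb)
  have h0 : ∀ {c : R}, c ∈ F.fil 1 → c ^ (N + 2) = 0 := fun hc => by
    rw [pow_succ, F.pow_eq_zero hc, zero_mul]
  rw [IsNilpotent.exp_eq_sum (h0 hab), IsNilpotent.exp_eq_sum (h0 ha), ← Finset.sum_sub_distrib,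
    Finset.sum_range_succ', Finset.sum_range_succ']
  simp only [← smul_sub]
  have h1 : ∑ k ∈ Finset.range N, (((k + 1 + 1).factorial : ℚ)⁻¹) •
      ((a + b) ^ (k + 1 + 1) - a ^ (k + 1 + 1)) ∈ F.fil (n + 1) :=
    Submodule.sum_mem _ fun k _ => Submodule.smul_mem _ _
      (F.fil_antitone (by omega) (F.add_pow_sub_pow_mem ha hn hb (k + 1)))
  convert h1 using 1
  simp

theorem exp_sub_one_mem {a : R} (ha : a ∈ F.fil 1) : IsNilpotent.exp a - 1 ∈ F.fil 1 := by
  have h := F.exp_add_sub_mem (F.fil 1).zero_mem le_rfl ha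
  rw [zero_add, IsNilpotent.exp_zero] at h
  simpa using (F.fil 1).add_mem (F.fil_antitone (by omega) h) ha

theorem exp_mul_euler_exp_neg_mem {Λ : Submodule ℚ R}
    (hbr : ∀ a ∈ Λ, ∀ b ∈ Λ, a * b - b * a ∈ Λ) (heu : ∀ a ∈ Λ, F.euler a ∈ Λ)
    (h1 : Λ ≤ F.fil 1) {u : R} (hu : u ∈ Λ) :
    IsNilpotent.exp u * F.euler (IsNilpotent.exp (-u)) ∈ Λ := by
  have hnil := F.isNilpotent (h1 hu)
  have hnil' : IsNilpotent (-u) := hnil.neg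
  let ℓ := Algebra.lmul ℚ R
  let S : Submodule ℚ (Module.End ℚ R) := Submodule.span ℚ {F.euler} ⊔ Λ.map ℓ.toLinearMap
  have hS : ∀ s ∈ S, ℓ u * s - s * ℓ u ∈ S := by
    intro s hs
    obtain ⟨e, he, m, hm, rfl⟩ := Submodule.mem_sup.1 hs
    obtain ⟨c, rfl⟩ := Submodule.mem_span_singleton.1 he
    obtain ⟨l, hl, rfl⟩ := hm
    refine Submodule.mem_sup_right
      ⟨(u * l - l * u) - c • F.euler u, Λ.sub_mem (hbr u hu l hl) (Λ.smul_mem c (heu u hu)), ?_⟩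
    ext r
    simp [ℓ, F.euler_mul]
    noncomm_ring
  have key := exp_conj_mem (hnil.map ℓ) S hS
    (Submodule.mem_sup_left (Submodule.mem_span_singleton_self F.euler))
  rw [← map_neg, ← IsNilpotent.map_exp hnil, ← IsNilpotent.map_exp hnil'] at key
  obtain ⟨e, he, m, hm, h⟩ := Submodule.mem_sup.1 key
  obtain ⟨c, rfl⟩ := Submodule.mem_span_singleton.1 he
  obtain ⟨l, hl, rfl⟩ := hm
  have h2 := LinearMap.congr_fun h 1
  simp [ℓ, F.euler_one] at h2
  rwa [← h2]

/-- The product of exponentials of two elements of a Lie subalgebra stable under the Euler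
derivation is again such an exponential. -/
theorem exists_exp_eq_mul {Λ : Submodule ℚ R}
    (hbr : ∀ a ∈ Λ, ∀ b ∈ Λ, a * b - b * a ∈ Λ) (heu : ∀ a ∈ Λ, F.euler a ∈ Λ)
    (h1 : Λ ≤ F.fil 1) {u v : R} (hu : u ∈ Λ) (hv : v ∈ Λ) :
    ∃ h ∈ Λ, IsNilpotent.exp h = IsNilpotent.exp u * IsNilpotent.exp v := by
  have hnil : ∀ {a : R}, a ∈ Λ → IsNilpotent a := fun ha => F.isNilpotent (h1 ha)
  have hexp : ∀ {a : R}, a ∈ Λ → IsNilpotent.exp a * IsNilpotent.exp (-a) = 1 :=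
    fun ha => IsNilpotent.exp_mul_exp_neg_self (hnil ha)
  have hexp' : ∀ {a : R}, a ∈ Λ → IsNilpotent.exp (-a) * IsNilpotent.exp a = 1 :=
    fun ha => IsNilpotent.exp_neg_mul_exp_self (hnil ha)
  have hconj : ∀ {a b : R}, a ∈ Λ → b ∈ Λ →
      IsNilpotent.exp a * b * IsNilpotent.exp (-a) ∈ Λ :=
    fun ha hb => exp_conj_mem (hnil ha) Λ (hbr _ ha) hb
  have hE : ∀ {a : R}, a ∈ Λ → IsNilpotent.exp a * F.euler (IsNilpotent.exp (-a)) ∈ Λ :=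
    fun ha => F.exp_mul_euler_exp_neg_mem hbr heu h1 ha
  set g := IsNilpotent.exp u * IsNilpotent.exp v with hg
  set g' := IsNilpotent.exp (-v) * IsNilpotent.exp (-u) with hg'
  have hgg' : g * g' = 1 := by
    rw [hg, hg', mul_assoc, ← mul_assoc (IsNilpotent.exp v), hexp hv, one_mul, hexp hu]
  have hg1 : g - 1 ∈ F.fil 1 := by
    have : g - 1 = (IsNilpotent.exp u - 1) * IsNilpotent.exp v + (IsNilpotent.exp v - 1) := by
      rw [hg]; noncomm_ring
    rw [this]
    exact Submodule.add_mem _ (F.mul_mem_right _ (F.exp_sub_one_mem (h1 hu)))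
      (F.exp_sub_one_mem (h1 hv))
  have hgE : g * F.euler g' ∈ Λ := by
    have : g * F.euler g' = IsNilpotent.exp u * (IsNilpotent.exp v * F.euler (IsNilpotent.exp (-v)))
        * IsNilpotent.exp (-u) + IsNilpotent.exp u * (IsNilpotent.exp v * IsNilpotent.exp (-v)) *
          F.euler (IsNilpotent.exp (-u)) := by
      rw [hg, hg', F.euler_mul]; noncomm_ring
    rw [this, hexp hv, mul_one]
    exact Λ.add_mem (hconj hu (hE hv)) (hE hu)
  suffices H : ∀ n, ∃ h ∈ Λ, IsNilpotent.exp (-h) * g - 1 ∈ F.fil (n + 1) by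
    obtain ⟨h, hh, h2⟩ := H N
    rw [F.fil_last, Submodule.mem_bot, sub_eq_zero] at h2
    refine ⟨h, hh, ?_⟩
    rw [← mul_one (IsNilpotent.exp h), ← h2, ← mul_assoc, hexp hh, one_mul]
  intro n
  induction n with
  | zero => exact ⟨0, Λ.zero_mem, by simpa [IsNilpotent.exp_zero] using hg1⟩
  | succ n ih =>
    obtain ⟨h, hh, hr⟩ := ih
    have hh' : -h ∈ Λ := Λ.neg_mem hh
    set r := IsNilpotent.exp (-h) * g - 1 with hrdef
    set s := g' * IsNilpotent.exp h - 1 with hsdef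
    have hrs : (1 + r) * (1 + s) = 1 := by
      rw [hrdef, hsdef, add_sub_cancel, add_sub_cancel, mul_assoc, ← mul_assoc g, hgg', one_mul,
        hexp' hh]
    have hs : s = -(r * (1 + s)) := by
      have : (1 + r) * (1 + s) = 1 + s + r * (1 + s) := by noncomm_ring
      rw [this] at hrs
      rw [eq_neg_iff_add_eq_zero]
      rw [add_assoc] at hrs
      exact add_eq_left.1 hrs
    have hsmem : s ∈ F.fil (n + 1) := by
      rw [hs]; exact Submodule.neg_mem _ (F.mul_mem_right _ hr)
    have hdeg : n + 1 + 1 ≤ n + 1 + (n + 1) := by omega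
    have hrs2 : r + s ∈ F.fil (n + 1 + 1) := by
      have : r + s = -(r * s) := by
        rw [← sub_eq_zero]
        have : r + s - -(r * s) = (1 + r) * (1 + s) - 1 := by noncomm_ring
        rw [this, hrs, sub_self]
      rw [this]
      exact Submodule.neg_mem _ (F.fil_antitone hdeg (F.fil_mul_mem hr hsmem))
    have hlam : (1 + r) * F.euler s ∈ Λ := by
      have h3 : F.euler s = F.euler (g' * IsNilpotent.exp h) := by
        rw [hsdef, map_sub, F.euler_one, sub_zero]
      have h4 : (1 + r) * F.euler s =
          IsNilpotent.exp (-h) * (g * F.euler g') * IsNilpotent.exp h +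
          IsNilpotent.exp (-h) * (g * g') * F.euler (IsNilpotent.exp h) := by
        rw [h3, hrdef, F.euler_mul, add_sub_cancel]; noncomm_ring
      rw [h4, hgg', mul_one]
      have h5 := hconj hh' hgE
      have h6 := hE hh'
      rw [neg_neg] at h5 h6
      exact Λ.add_mem h5 h6
    set c : ℚ := ((n + 1 : ℕ) : ℚ) with hc
    have hc0 : c ≠ 0 := by rw [hc]; positivity
    set w := -(c⁻¹ • ((1 + r) * F.euler s)) with hw
    have hwΛ : w ∈ Λ := Λ.neg_mem (Λ.smul_mem _ hlam)
    have hrw : r - w ∈ F.fil (n + 1 + 1) := by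
      have : r - w = (r + s) + c⁻¹ • (F.euler s - c • s) + c⁻¹ • (r * F.euler s) := by
        rw [hw, smul_sub, smul_smul, inv_mul_cancel₀ hc0, one_smul, add_mul, one_mul, smul_add]
        abel
      rw [this]
      exact Submodule.add_mem _ (Submodule.add_mem _ hrs2
        (Submodule.smul_mem _ _ (F.euler_sub_mem hsmem))) (Submodule.smul_mem _ _
          (F.fil_antitone hdeg (F.fil_mul_mem hr (F.euler_mem hsmem))))
    have hwmem : w ∈ F.fil (n + 1) := by
      have := Submodule.sub_mem _ hr (F.fil_antitone (Nat.le_succ _) hrw)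
      simpa using this
    refine ⟨h + w, Λ.add_mem hh hwΛ, ?_⟩
    have hexpadd := F.exp_add_sub_mem (h1 hh') (by omega) (Submodule.neg_mem _ hwmem)
    have : IsNilpotent.exp (-(h + w)) * g - 1 =
        (IsNilpotent.exp (-h + -w) - IsNilpotent.exp (-h) - -w) * g + (r - w) - w * (g - 1) := by
      rw [neg_add, hrdef]; noncomm_ring
    rw [this]
    exact Submodule.sub_mem _ (Submodule.add_mem _ (F.mul_mem_right _ hexpadd) hrw)
      (F.fil_mul_mem hwmem hg1)

end EulerFiltration

end Filtration

section Words

attribute [local instance] LieRing.ofAssociativeRing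

variable {X : Type*}

/-- The free associative `ℚ`-algebra on `X`, with its basis of words. -/
abbrev WordAlgebra (X : Type*) := MonoidAlgebra ℚ (FreeMonoid X)

namespace WordAlgebra

/-- A word as an element of the free associative algebra. -/
noncomputable def word (w : FreeMonoid X) : WordAlgebra X := MonoidAlgebra.of ℚ _ w

theorem word_mul (v w : FreeMonoid X) : word (v * w) = word v * word w :=
  map_mul (MonoidAlgebra.of ℚ _) v w

theorem word_one : word (1 : FreeMonoid X) = 1 := map_one (MonoidAlgebra.of ℚ _)

theorem word_induction {p : WordAlgebra X → Prop} (a : WordAlgebra X)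
    (zero : p 0) (add : ∀ a b, p a → p b → p (a + b)) (smul : ∀ (c : ℚ) a, p a → p (c • a))
    (hword : ∀ w, p (word w)) : p a := by
  induction a using MonoidAlgebra.induction_linear with
  | zero => exact zero
  | add a b ha hb => exact add a b ha hb
  | single w c =>
    have := smul c _ (hword w)
    simpa [word] using this

/-- The linear map with prescribed values on words. -/
noncomputable def linearExt {M : Type*} [AddCommGroup M] [Module ℚ M] (f : FreeMonoid X → M) :
    WordAlgebra X →ₗ[ℚ] M :=
  (MonoidAlgebra.basis (FreeMonoid X) ℚ).constr ℚ f

@[simp]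
theorem linearExt_word {M : Type*} [AddCommGroup M] [Module ℚ M] (f : FreeMonoid X → M)
    (w : FreeMonoid X) : linearExt f (word w) = f w := by
  have := (MonoidAlgebra.basis (FreeMonoid X) ℚ).constr_basis ℚ f w
  simpa [linearExt, word] using this

/-- The span of the words of length at least `n`. -/
noncomputable def fil (X : Type*) (n : ℕ) : Submodule ℚ (WordAlgebra X) :=
  Submodule.span ℚ (word '' {w | n ≤ w.length})

theorem word_mem_fil {n : ℕ} {w : FreeMonoid X} (h : n ≤ w.length) : word w ∈ fil X n :=
  Submodule.subset_span ⟨w, h, rfl⟩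

theorem fil_zero : fil X 0 = ⊤ := by
  rw [eq_top_iff]
  rintro a -
  induction a using word_induction with
  | zero => exact Submodule.zero_mem _
  | add a b ha hb => exact Submodule.add_mem _ ha hb
  | smul c a ha => exact Submodule.smul_mem _ _ ha
  | hword w => exact word_mem_fil (Nat.zero_le _)

theorem fil_antitone : Antitone (fil X) := fun _ _ h =>
  Submodule.span_mono (Set.image_mono fun _ hw => h.trans hw)

theorem fil_mul_mem {m n : ℕ} {a b : WordAlgebra X} (ha : a ∈ fil X m) (hb : b ∈ fil X n) :
    a * b ∈ fil X (m + n) := by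
  have h := Submodule.mul_mem_mul ha hb
  rw [fil, fil, Submodule.span_mul_span] at h
  refine Submodule.span_mono ?_ h
  rintro _ ⟨_, ⟨v, hv, rfl⟩, _, ⟨w, hw, rfl⟩, rfl⟩
  exact ⟨v * w, by simpa using add_le_add hv hw, word_mul v w⟩

/-- The derivation multiplying each word by its length. -/
noncomputable def euler : WordAlgebra X →ₗ[ℚ] WordAlgebra X :=
  linearExt fun w => (w.length : ℚ) • word w

theorem euler_word (w : FreeMonoid X) : euler (word w) = (w.length : ℚ) • word w :=
  linearExt_word _ w

theorem euler_mul (a b : WordAlgebra X) : euler (a * b) = euler a * b + a * euler b := by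
  induction a using word_induction with
  | zero => simp
  | add a a' ha ha' => simp only [add_mul, map_add, ha, ha']; abel
  | smul c a ha => simp [ha]
  | hword v =>
    induction b using word_induction with
    | zero => simp
    | add a a' ha ha' => simp only [mul_add, map_add, ha, ha']; abel
    | smul c a ha => simp [ha]
    | hword w => simp [← word_mul, euler_word, add_smul]

theorem euler_sub_mem {n : ℕ} {a : WordAlgebra X} (ha : a ∈ fil X n) :
    euler a - (n : ℚ) • a ∈ fil X (n + 1) := by
  induction ha using Submodule.span_induction with
  | zero => simp
  | add a b _ _ ha hb =>
    have := Submodule.add_mem _ ha hb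
    rwa [← add_sub_add_comm, ← map_add, ← smul_add] at this
  | smul c a _ ha =>
    have := Submodule.smul_mem _ c ha
    rwa [smul_sub, ← map_smul, smul_comm] at this
  | mem a ha =>
    obtain ⟨w, hw, rfl⟩ := ha
    rw [euler_word, ← sub_smul]
    rcases eq_or_lt_of_le (show n ≤ w.length from hw) with h | h
    · simp [← h]
    · exact Submodule.smul_mem _ _ (word_mem_fil h)

/-- The right-nested bracketing of words. -/
noncomputable def dynkin (f : X → L) : WordAlgebra X →ₗ[ℚ] L :=
  linearExt fun w => wordBracket (w.toList.map f)

/-- The right-nested bracketing of words, divided by the length. -/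
noncomputable def dynkinNorm (f : X → L) : WordAlgebra X →ₗ[ℚ] L :=
  linearExt fun w => (w.length : ℚ)⁻¹ • wordBracket (w.toList.map f)

theorem dynkin_word (f : X → L) (w : FreeMonoid X) :
    dynkin f (word w) = wordBracket (w.toList.map f) :=
  linearExt_word _ w

theorem dynkinNorm_word (f : X → L) (w : FreeMonoid X) :
    dynkinNorm f (word w) = (w.length : ℚ)⁻¹ • wordBracket (w.toList.map f) :=
  linearExt_word _ w

theorem dynkinNorm_euler (f : X → L) (a : WordAlgebra X) :
    dynkinNorm f (euler a) = dynkin f a := by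
  induction a using word_induction with
  | zero => simp
  | add a b ha hb => simp [ha, hb]
  | smul c a ha => simp [ha]
  | hword w =>
    rw [euler_word, map_smul, dynkinNorm_word, dynkin_word, smul_smul]
    by_cases h : w = 1
    · simp [h, wordBracket]
    · have : (w.length : ℚ) ≠ 0 := by
        simpa [FreeMonoid.length_eq_zero] using h
      rw [mul_inv_cancel₀ this, one_smul]

end WordAlgebra

theorem wordBracket_cons {M : Type*} [LieRing M] (a : M) {l : List M} (hl : l ≠ []) :
    wordBracket (a :: l) = ⁅a, wordBracket l⁆ := by
  cases l with
  | nil => exact absurd rfl hl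
  | cons b l => rfl

theorem wordBracket_mem_lowerCentralSeries (l : List L) (n : ℕ) (hn : n + 1 ≤ l.length) :
    wordBracket l ∈ LieModule.lowerCentralSeries ℚ L L n := by
  induction n generalizing l with
  | zero => simp
  | succ n ih =>
    match l with
    | [] => simp at hn
    | [a] => simp at hn
    | a :: b :: l =>
      rw [LieModule.lowerCentralSeries_succ]
      exact LieSubmodule.lie_mem_lie (LieSubmodule.mem_top a) (ih (b :: l) (by simpa using hn))

namespace WordAlgebra

theorem dynkinNorm_eq_zero {N : ℕ} (hnil : LieModule.lowerCentralSeries ℚ L L N = ⊥) (f : X → L)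
    {a : WordAlgebra X} (ha : a ∈ fil X (N + 1)) : dynkinNorm f a = 0 := by
  suffices fil X (N + 1) ≤ LinearMap.ker (dynkinNorm f) from this ha
  rw [fil, Submodule.span_le]
  rintro _ ⟨w, hw, rfl⟩
  have h : wordBracket (w.toList.map f) ∈ LieModule.lowerCentralSeries ℚ L L N :=
    wordBracket_mem_lowerCentralSeries _ _ (by rw [List.length_map]; exact hw)
  rw [hnil, LieSubmodule.mem_bot] at h
  simp [dynkinNorm_word, h]

/-- The action of the free associative algebra on `L` extending the adjoint action. -/
noncomputable def adHom (f : X → L) : WordAlgebra X →ₐ[ℚ] Module.End ℚ L :=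
  MonoidAlgebra.lift ℚ _ _ (FreeMonoid.lift fun x => (LieAlgebra.ad ℚ L (f x) : Module.End ℚ L))

theorem adHom_word (f : X → L) (w : FreeMonoid X) :
    adHom f (word w) =
      (w.toList.map fun x => (LieAlgebra.ad ℚ L (f x) : Module.End ℚ L)).prod := by
  simp [adHom, word, FreeMonoid.lift_apply]

theorem dynkin_mul (f : X → L) (a : WordAlgebra X) {b : WordAlgebra X} (hb : b ∈ fil X 1) :
    dynkin f (a * b) = adHom f a (dynkin f b) := by
  induction a using word_induction with
  | zero => simp
  | add a a' ha ha' => simp [add_mul, ha, ha']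
  | smul c a ha => simp [ha]
  | hword v =>
    induction hb using Submodule.span_induction with
    | zero => simp
    | add b b' _ _ hb hb' => simp [mul_add, hb, hb']
    | smul c b _ hb => simp [hb]
    | mem b hb =>
      obtain ⟨w, hw, rfl⟩ := hb
      rw [← word_mul, dynkin_word, dynkin_word, adHom_word, FreeMonoid.toList_mul]
      have hw' : w.toList ≠ [] := by
        intro h
        have : w.length = 0 := by simpa [FreeMonoid.length] using congrArg List.length h
        exact absurd hw (by simp [this])
      induction v.toList with
      | nil => simp
      | cons x l ih =>
        rw [List.cons_append, List.map_cons, wordBracket_cons _ (by simp [hw']), ih]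
        simp

/-- The canonical homomorphism from the free Lie algebra to the free associative algebra. -/
noncomputable def ofFreeLie (X : Type*) : FreeLieAlgebra ℚ X →ₗ⁅ℚ⁆ WordAlgebra X :=
  FreeLieAlgebra.lift ℚ fun x => word (FreeMonoid.of x)

theorem ofFreeLie_of (x : X) :
    ofFreeLie X (FreeLieAlgebra.of ℚ x) = word (FreeMonoid.of x) := by
  simp [ofFreeLie]

end WordAlgebra

theorem freeLieAlgebra_mem_of_lie_mem (K : Submodule ℚ (FreeLieAlgebra ℚ X))
    (hof : ∀ x, FreeLieAlgebra.of ℚ x ∈ K) (hlie : ∀ a ∈ K, ∀ b ∈ K, ⁅a, b⁆ ∈ K)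
    (u : FreeLieAlgebra ℚ X) : u ∈ K := by
  let K' : LieSubalgebra ℚ (FreeLieAlgebra ℚ X) :=
    { K with lie_mem' := fun {a b} ha hb => hlie a ha b hb }
  let g : FreeLieAlgebra ℚ X →ₗ⁅ℚ⁆ K' :=
    FreeLieAlgebra.lift ℚ fun x => ⟨FreeLieAlgebra.of ℚ x, hof x⟩
  have : K'.incl.comp g = LieHom.id := by
    ext x
    simp [g]
  have h2 := LieHom.congr_fun this u
  have h3 : ((g u : K') : FreeLieAlgebra ℚ X) = u := by simpa using h2
  rw [← h3]
  exact (g u).2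

namespace WordAlgebra

theorem ofFreeLie_mem_fil (u : FreeLieAlgebra ℚ X) : ofFreeLie X u ∈ fil X 1 := by
  refine freeLieAlgebra_mem_of_lie_mem ((fil X 1).comap (ofFreeLie X).toLinearMap)
    (fun x => ?_) (fun a ha b hb => ?_) u
  · simpa [ofFreeLie_of] using word_mem_fil (w := FreeMonoid.of x) (by simp)
  · simp only [Submodule.mem_comap, LieHom.coe_toLinearMap] at ha hb ⊢
    rw [LieHom.map_lie, LieRing.of_associative_ring_bracket]
    exact Submodule.sub_mem _ (fil_antitone (by omega) (fil_mul_mem ha hb))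
      (fil_antitone (by omega) (fil_mul_mem hb ha))

theorem adHom_ofFreeLie (f : X → L) (u : FreeLieAlgebra ℚ X) :
    adHom f (ofFreeLie X u) = LieAlgebra.ad ℚ L (FreeLieAlgebra.lift ℚ f u) := by
  have : ((adHom f : WordAlgebra X →ₐ[ℚ] Module.End ℚ L) : WordAlgebra X →ₗ⁅ℚ⁆
      Module.End ℚ L).comp (ofFreeLie X) =
      (LieAlgebra.ad ℚ L).comp (FreeLieAlgebra.lift ℚ f) := by
    ext x : 1
    simp [ofFreeLie_of, adHom_word]
  exact LieHom.congr_fun this u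

theorem mem_span_homogeneous (f : X → L) (u : FreeLieAlgebra ℚ X) :
    u ∈ Submodule.span ℚ {u : FreeLieAlgebra ℚ X | ∃ n : ℕ, n ≠ 0 ∧
      euler (ofFreeLie X u) = (n : ℚ) • ofFreeLie X u ∧
      dynkin f (ofFreeLie X u) = (n : ℚ) • FreeLieAlgebra.lift ℚ f u} := by
  refine freeLieAlgebra_mem_of_lie_mem _ (fun x => Submodule.subset_span ?_)
    (fun a ha b hb => ?_) u
  · refine ⟨1, one_ne_zero, ?_, ?_⟩
    · simp [ofFreeLie_of, euler_word]
    · simp [ofFreeLie_of, dynkin_word, wordBracket]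
  · induction ha, hb using Submodule.span_induction₂ with
    | zero_left => simp
    | zero_right => simp
    | add_left a b c _ _ _ h h' => rw [add_lie]; exact Submodule.add_mem _ h h'
    | add_right a b c _ _ _ h h' => rw [lie_add]; exact Submodule.add_mem _ h h'
    | smul_left c a b _ _ h => rw [smul_lie]; exact Submodule.smul_mem _ _ h
    | smul_right c a b _ _ h => rw [lie_smul]; exact Submodule.smul_mem _ _ h
    | mem_mem a b ha hb =>
      obtain ⟨m, hm, ha1, ha2⟩ := ha
      obtain ⟨n, hn, hb1, hb2⟩ := hb
      refine Submodule.subset_span ⟨m + n, by omega, ?_, ?_⟩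
      · rw [LieHom.map_lie, LieRing.of_associative_ring_bracket, map_sub, euler_mul, euler_mul,
          ha1, hb1]
        push_cast
        simp only [smul_mul_assoc, mul_smul_comm]
        module
      · rw [LieHom.map_lie, LieRing.of_associative_ring_bracket, map_sub,
          dynkin_mul _ _ (ofFreeLie_mem_fil b), dynkin_mul _ _ (ofFreeLie_mem_fil a), ha2, hb2,
          adHom_ofFreeLie, adHom_ofFreeLie, LieHom.map_lie]
        push_cast
        rw [LieAlgebra.ad_apply, LieAlgebra.ad_apply, lie_smul, lie_smul,
          ← lie_skew (FreeLieAlgebra.lift ℚ f b)]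
        module

/-- The **Dynkin–Specht–Wever theorem**. -/
theorem dynkinNorm_ofFreeLie (f : X → L) (u : FreeLieAlgebra ℚ X) :
    dynkinNorm f (ofFreeLie X u) = FreeLieAlgebra.lift ℚ f u := by
  induction mem_span_homogeneous f u using Submodule.span_induction with
  | zero => simp
  | add a b _ _ ha hb => simp [ha, hb]
  | smul c a _ ha => simp [ha]
  | mem u hu =>
    obtain ⟨n, hn, h1, h2⟩ := hu
    have hn' : (n : ℚ) ≠ 0 := by exact_mod_cast hn
    have h3 := dynkinNorm_euler f (ofFreeLie X u)
    rw [h1, h2, map_smul] at h3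
    exact smul_right_injective L hn' h3

theorem euler_ofFreeLie_mem_range (u : FreeLieAlgebra ℚ X) :
    ∃ v, ofFreeLie X v = euler (ofFreeLie X u) := by
  induction mem_span_homogeneous (FreeLieAlgebra.of ℚ) u using Submodule.span_induction with
  | zero => exact ⟨0, by simp⟩
  | add a b _ _ ha hb =>
    obtain ⟨a', ha⟩ := ha
    obtain ⟨b', hb⟩ := hb
    exact ⟨a' + b', by simp [ha, hb]⟩
  | smul c a _ ha =>
    obtain ⟨a', ha⟩ := ha
    exact ⟨c • a', by simp [ha]⟩
  | mem u hu =>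
    obtain ⟨n, -, h1, -⟩ := hu
    exact ⟨(n : ℚ) • u, by rw [h1, map_smul]⟩

end WordAlgebra

end Words

section Truncation

attribute [local instance] LieRing.ofAssociativeRing

variable {X : Type*}

namespace WordAlgebra

theorem mul_mem_fil_left {n : ℕ} (a : WordAlgebra X) {b : WordAlgebra X} (hb : b ∈ fil X n) :
    a * b ∈ fil X n := by
  have := fil_mul_mem (a := a) (m := 0) (by rw [fil_zero]; trivial) hb
  rwa [zero_add] at this

theorem mul_mem_fil_right {n : ℕ} {a : WordAlgebra X} (b : WordAlgebra X) (ha : a ∈ fil X n) :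
    a * b ∈ fil X n :=
  fil_mul_mem ha (n := 0) (by rw [fil_zero]; trivial)

theorem euler_mem_fil {n : ℕ} {a : WordAlgebra X} (ha : a ∈ fil X n) : euler a ∈ fil X n := by
  have := Submodule.add_mem _ (fil_antitone n.le_succ (euler_sub_mem ha))
    (Submodule.smul_mem _ (n : ℚ) ha)
  rwa [sub_add_cancel] at this

/-- The ideal spanned by the words of length greater than `N`. -/
noncomputable def truncIdeal (X : Type*) (N : ℕ) : Ideal (WordAlgebra X) where
  carrier := fil X (N + 1)
  add_mem' := Submodule.add_mem _
  zero_mem' := Submodule.zero_mem _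
  smul_mem' a _ hb := mul_mem_fil_left a hb

instance (N : ℕ) : (truncIdeal X N).IsTwoSided := ⟨fun b ha => mul_mem_fil_right b ha⟩

/-- The quotient map onto the free nilpotent associative algebra. -/
noncomputable def truncMap (X : Type*) (N : ℕ) :
    WordAlgebra X →ₐ[ℚ] WordAlgebra X ⧸ truncIdeal X N :=
  Ideal.Quotient.mkₐ ℚ (truncIdeal X N)

theorem truncMap_surjective (N : ℕ) : Function.Surjective (truncMap X N) :=
  Ideal.Quotient.mkₐ_surjective ℚ _

theorem truncMap_eq_zero {N : ℕ} {a : WordAlgebra X} :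
    truncMap X N a = 0 ↔ a ∈ fil X (N + 1) :=
  Ideal.Quotient.eq_zero_iff_mem

theorem truncMap_eq {N : ℕ} {a b : WordAlgebra X} :
    truncMap X N a = truncMap X N b ↔ a - b ∈ fil X (N + 1) := by
  rw [← truncMap_eq_zero, map_sub, sub_eq_zero]

theorem exists_truncEuler (X : Type*) (N : ℕ) :
    ∃ e : (WordAlgebra X ⧸ truncIdeal X N) →ₗ[ℚ] WordAlgebra X ⧸ truncIdeal X N,
      ∀ a, e (truncMap X N a) = truncMap X N (euler a) := by
  obtain ⟨s, hs⟩ := (truncMap X N).toLinearMap.exists_rightInverse_of_surjective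
    (LinearMap.range_eq_top.2 (truncMap_surjective N))
  refine ⟨(truncMap X N).toLinearMap ∘ₗ euler ∘ₗ s, fun a => ?_⟩
  have h : truncMap X N (s (truncMap X N a)) = truncMap X N a :=
    LinearMap.congr_fun hs (truncMap X N a)
  rw [truncMap_eq] at h
  have h2 := euler_mem_fil h
  rw [map_sub, ← truncMap_eq] at h2
  exact h2

/-- The length filtration on the free nilpotent associative algebra. -/
noncomputable def truncFiltration (X : Type*) (N : ℕ) :
    EulerFiltration (WordAlgebra X ⧸ truncIdeal X N) N where
  fil n := (fil X n).map (truncMap X N).toLinearMap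
  fil_zero := by
    rw [fil_zero, Submodule.map_top, LinearMap.range_eq_top]
    exact truncMap_surjective N
  fil_antitone _ _ h := Submodule.map_mono (fil_antitone h)
  fil_mul_mem := by
    rintro m n _ _ ⟨a, ha, rfl⟩ ⟨b, hb, rfl⟩
    exact ⟨a * b, fil_mul_mem ha hb, map_mul (truncMap X N) a b⟩
  fil_last := by
    rw [eq_bot_iff]
    rintro _ ⟨a, ha, rfl⟩
    exact truncMap_eq_zero.2 ha
  euler := (exists_truncEuler X N).choose
  euler_mul a b := by
    obtain ⟨a, rfl⟩ := truncMap_surjective N a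
    obtain ⟨b, rfl⟩ := truncMap_surjective N b
    simp only [← map_mul, ← map_add, (exists_truncEuler X N).choose_spec, euler_mul]
  euler_sub_mem := by
    rintro n _ ⟨a, ha, rfl⟩
    refine ⟨_, euler_sub_mem ha, ?_⟩
    simp [(exists_truncEuler X N).choose_spec]

theorem truncFiltration_euler (N : ℕ) (a : WordAlgebra X) :
    (truncFiltration X N).euler (truncMap X N a) = truncMap X N (euler a) :=
  (exists_truncEuler X N).choose_spec a

theorem truncMap_ofFreeLie_mem_fil (N : ℕ) (u : FreeLieAlgebra ℚ X) :
    truncMap X N (ofFreeLie X u) ∈ (truncFiltration X N).fil 1 :=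
  ⟨_, ofFreeLie_mem_fil u, rfl⟩

theorem exists_exp_truncMap_eq_mul (N : ℕ) (u v : FreeLieAlgebra ℚ X) :
    ∃ h, IsNilpotent.exp (truncMap X N (ofFreeLie X h)) =
      IsNilpotent.exp (truncMap X N (ofFreeLie X u)) *
        IsNilpotent.exp (truncMap X N (ofFreeLie X v)) := by
  have key := (truncFiltration X N).exists_exp_eq_mul
    (Λ := LinearMap.range ((truncMap X N).toLinearMap ∘ₗ (ofFreeLie X).toLinearMap))
    (u := truncMap X N (ofFreeLie X u)) (v := truncMap X N (ofFreeLie X v)) ?_ ?_ ?_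
    ⟨u, rfl⟩ ⟨v, rfl⟩
  · obtain ⟨_, ⟨h, rfl⟩, hh⟩ := key
    exact ⟨h, hh⟩
  · rintro _ ⟨a, rfl⟩ _ ⟨b, rfl⟩
    refine ⟨⁅a, b⁆, ?_⟩
    simp [LieRing.of_associative_ring_bracket]
  · rintro _ ⟨a, rfl⟩
    obtain ⟨b, hb⟩ := euler_ofFreeLie_mem_range a
    exact ⟨b, by simp [hb, truncFiltration_euler]⟩
  · rintro _ ⟨a, rfl⟩
    exact truncMap_ofFreeLie_mem_fil N a

/-- The logarithm of `exp a * exp b`, with all the series truncated after degree `N`. -/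
noncomputable def logMulExp {R : Type*} [Ring R] [Algebra ℚ R] (N : ℕ) (a b : R) : R :=
  logTrunc N (expTrunc N a * expTrunc N b - 1)

theorem map_logMulExp {R S : Type*} [Ring R] [Algebra ℚ R] [Ring S] [Algebra ℚ S] (f : R →ₐ[ℚ] S)
    (N : ℕ) (a b : R) : f (logMulExp N a b) = logMulExp N (f a) (f b) := by
  simp [logMulExp, map_logTrunc, map_expTrunc]

theorem truncMap_eq_logMulExp {N : ℕ} {u v h : FreeLieAlgebra ℚ X}
    (hh : IsNilpotent.exp (truncMap X N (ofFreeLie X h)) =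
      IsNilpotent.exp (truncMap X N (ofFreeLie X u)) *
        IsNilpotent.exp (truncMap X N (ofFreeLie X v))) :
    truncMap X N (ofFreeLie X h) =
      truncMap X N (logMulExp N (ofFreeLie X u) (ofFreeLie X v)) := by
  have key (u : FreeLieAlgebra ℚ X) := (truncFiltration X N).pow_eq_zero
    (truncMap_ofFreeLie_mem_fil N u)
  rw [exp_eq_expTrunc (key h), exp_eq_expTrunc (key u), exp_eq_expTrunc (key v)] at hh
  rw [map_logMulExp, logMulExp, ← hh, logTrunc_expTrunc (key h)]

theorem truncMap_eq_of_exp_eq {N : ℕ} {u v : FreeLieAlgebra ℚ X}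
    (hh : IsNilpotent.exp (truncMap X N (ofFreeLie X u)) =
      IsNilpotent.exp (truncMap X N (ofFreeLie X v))) :
    truncMap X N (ofFreeLie X u) = truncMap X N (ofFreeLie X v) := by
  have key (u : FreeLieAlgebra ℚ X) := (truncFiltration X N).pow_eq_zero
    (truncMap_ofFreeLie_mem_fil N u)
  rw [exp_eq_expTrunc (key u), exp_eq_expTrunc (key v)] at hh
  rw [← logTrunc_expTrunc (key u), hh, logTrunc_expTrunc (key v)]

theorem sum_smul_word_pow {ι : Type*} [Fintype ι] (c : ι → ℚ) (w : ι → FreeMonoid X) (m : ℕ) :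
    (∑ i, c i • word (w i)) ^ m = ∑ f : Fin m → ι,
      (List.ofFn fun i => c (f i)).prod • word (List.ofFn fun i => w (f i)).prod := by
  induction m with
  | zero => simp [word_one]
  | succ m ih =>
    rw [pow_succ', ih, Finset.sum_mul_sum, ← Finset.sum_product', Finset.univ_product_univ]
    refine Fintype.sum_equiv (Fin.consEquiv fun _ => ι) _ _ fun p => ?_
    simp [List.ofFn_succ, word_mul, smul_smul, mul_comm]

/-- The coefficient of `x ^ p * y ^ q` in `exp x * exp y - 1`. -/
noncomputable def expMulCoeff (pq : ℕ × ℕ) : ℚ :=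
  if 0 < pq.1 + pq.2 then ((pq.1.factorial * pq.2.factorial : ℕ) : ℚ)⁻¹ else 0

/-- The word `x ^ p * y ^ q` in two letters. -/
def powMulPow (pq : ℕ × ℕ) : FreeMonoid (Fin 2) :=
  FreeMonoid.of 0 ^ pq.1 * FreeMonoid.of 1 ^ pq.2

theorem toList_of_pow (x : X) (n : ℕ) :
    (FreeMonoid.of x ^ n).toList = List.replicate n x := by
  induction n with
  | zero => simp
  | succ n ih => simp [pow_succ', ih, List.replicate_succ]

theorem toList_powMulPow (pq : ℕ × ℕ) :
    (powMulPow pq).toList = List.replicate pq.1 0 ++ List.replicate pq.2 1 := by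
  simp [powMulPow, toList_of_pow]

theorem expTrunc_mul_expTrunc_sub_one (N : ℕ) :
    expTrunc N (word (FreeMonoid.of (0 : Fin 2))) * expTrunc N (word (FreeMonoid.of 1)) - 1 =
      ∑ pq : Fin (N + 1) × Fin (N + 1),
        expMulCoeff (pq.1, pq.2) • word (powMulPow (pq.1, pq.2)) := by
  have hpow (p q : ℕ) : word (powMulPow (p, q)) =
      word (FreeMonoid.of (0 : Fin 2)) ^ p * word (FreeMonoid.of 1) ^ q := by
    simp only [powMulPow, word, map_mul, map_pow]
  rw [sub_eq_iff_eq_add, expTrunc, expTrunc, Finset.sum_range, Finset.sum_range,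
    Finset.sum_mul_sum, ← Finset.sum_product', Finset.univ_product_univ,
    ← Finset.add_sum_erase _ _ (Finset.mem_univ (0, 0)),
    ← Finset.add_sum_erase (Finset.univ : Finset (Fin (N + 1) × Fin (N + 1))) (fun pq =>
      expMulCoeff (pq.1, pq.2) • word (powMulPow (pq.1, pq.2))) (Finset.mem_univ (0, 0))]
  have h0 : expMulCoeff (0, 0) = 0 := by simp [expMulCoeff]
  simp only [Fin.val_zero, h0, zero_smul, zero_add, pow_zero, Nat.factorial_zero]
  rw [add_comm]
  congr 1
  · refine Finset.sum_congr rfl fun pq hpq => ?_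
    have hpos : 0 < (pq.1 : ℕ) + pq.2 := by
      rw [Nat.pos_iff_ne_zero]
      intro h
      refine (Finset.mem_erase.1 hpq).1 (Prod.ext (Fin.ext ?_) (Fin.ext ?_))
      · exact (Nat.add_eq_zero_iff.1 h).1
      · exact (Nat.add_eq_zero_iff.1 h).2
    simp [expMulCoeff, hpos, hpow, smul_smul, mul_comm]
  · simp

theorem prod_map_expMulCoeff (ps : List (ℕ × ℕ)) :
    (ps.map expMulCoeff).prod = if ps.all fun pq => 0 < pq.1 + pq.2 then
      (((ps.map fun pq => pq.1.factorial * pq.2.factorial).prod : ℕ) : ℚ)⁻¹ else 0 := by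
  induction ps with
  | nil => simp
  | cons pq ps ih =>
    rw [List.map_cons, List.prod_cons, ih, expMulCoeff]
    by_cases h : 0 < pq.1 + pq.2
    · simp only [h, List.all_cons, decide_true, Bool.true_and, if_true, List.map_cons,
        List.prod_cons]
      split_ifs
      · rw [Nat.cast_mul (pq.1.factorial * pq.2.factorial), mul_inv]
      · simp
    · simp only [h, List.all_cons, decide_false, Bool.false_and, if_false, zero_mul]
      simp

theorem dynkinNorm_prod_powMulPow (u v : L) (ps : List (ℕ × ℕ)) :
    dynkinNorm ![u, v] (word (ps.map powMulPow).prod) =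
      (((ps.map fun pq => pq.1 + pq.2).sum : ℕ) : ℚ)⁻¹ • dynkinTerm u v ps := by
  have hlist : (ps.map powMulPow).prod.toList =
      (ps.map fun pq => List.replicate pq.1 0 ++ List.replicate pq.2 1).flatten := by
    induction ps with
    | nil => simp
    | cons pq ps ih =>
      rw [List.map_cons, List.prod_cons, FreeMonoid.toList_mul, ih,
        toList_powMulPow, List.map_cons, List.flatten_cons]
  have hlen : (ps.map powMulPow).prod.length = (ps.map fun pq => pq.1 + pq.2).sum := by
    rw [FreeMonoid.length, hlist]
    simp [Function.comp_def]
  have hmap : (ps.map powMulPow).prod.toList.map ![u, v] =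
      (ps.map fun pq => List.replicate pq.1 u ++ List.replicate pq.2 v).flatten := by
    simp [hlist, Function.comp_def]
  rw [dynkinNorm_word, hlen, hmap, dynkinTerm]

theorem bch_eq_dynkinNorm (N : ℕ) (u v : L) :
    bch N u v = dynkinNorm ![u, v]
      (logMulExp N (word (FreeMonoid.of 0)) (word (FreeMonoid.of 1))) := by
  rw [logMulExp, expTrunc_mul_expTrunc_sub_one, logTrunc, map_sum, bch]
  refine Finset.sum_congr rfl fun n _ => ?_
  rw [sum_smul_word_pow, map_smul, map_sum, Finset.smul_sum]
  refine Finset.sum_congr rfl fun f _ => ?_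
  set ps := List.ofFn fun i => (((f i).1 : ℕ), ((f i).2 : ℕ)) with hps
  have h1 : (List.ofFn fun i => expMulCoeff (((f i).1 : ℕ), ((f i).2 : ℕ))) =
      ps.map expMulCoeff := by
    rw [hps, List.map_ofFn]; rfl
  have h2 : (List.ofFn fun i => powMulPow (((f i).1 : ℕ), ((f i).2 : ℕ))) =
      ps.map powMulPow := by
    rw [hps, List.map_ofFn]; rfl
  have h3 : ps.length = n + 1 := by simp [hps]
  rw [h1, h2, map_smul, dynkinNorm_prod_powMulPow, smul_smul, smul_smul, prod_map_expMulCoeff,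
    dynkinCoeff, h3]
  congr 1
  split_ifs
  · simp only [Nat.add_sub_cancel, Nat.cast_add, Nat.cast_one, div_eq_mul_inv, mul_inv]
    ring
  · simp

theorem ofFreeLie_wordBracket_mem_fil (l : List (FreeLieAlgebra ℚ X)) :
    ofFreeLie X (wordBracket l) ∈ fil X l.length := by
  induction l with
  | nil => simp [wordBracket]
  | cons a l ih =>
    rcases eq_or_ne l [] with rfl | hl
    · exact ofFreeLie_mem_fil a
    · rw [wordBracket_cons a hl, LieHom.map_lie, LieRing.of_associative_ring_bracket,
        List.length_cons]
      have ha := ofFreeLie_mem_fil a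
      refine Submodule.sub_mem _ (fil_antitone ?_ (fil_mul_mem ha ih))
        (fil_mul_mem ih ha)
      omega

theorem ofFreeLie_dynkinNorm_mem_fil {Y : Type*} (f : Y → FreeLieAlgebra ℚ X) {n : ℕ}
    {a : WordAlgebra Y} (ha : a ∈ fil Y n) : ofFreeLie X (dynkinNorm f a) ∈ fil X n := by
  suffices fil Y n ≤ (fil X n).comap ((ofFreeLie X).toLinearMap ∘ₗ dynkinNorm f) from this ha
  rw [fil, Submodule.span_le]
  rintro _ ⟨w, hw, rfl⟩
  have h := ofFreeLie_wordBracket_mem_fil (w.toList.map f)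
  rw [List.length_map] at h
  have h2 := fil_antitone (show n ≤ w.toList.length from hw) h
  simpa [dynkinNorm_word] using Submodule.smul_mem _ _ h2

/-- The substitution of elements of a free Lie algebra for letters. -/
noncomputable def subst {Y : Type*} (f : Y → FreeLieAlgebra ℚ X) :
    WordAlgebra Y →ₐ[ℚ] WordAlgebra X :=
  MonoidAlgebra.lift ℚ _ _ (FreeMonoid.lift fun y => ofFreeLie X (f y))

theorem subst_word_of {Y : Type*} (f : Y → FreeLieAlgebra ℚ X) (y : Y) :
    subst f (word (FreeMonoid.of y)) = ofFreeLie X (f y) := by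
  simp [subst, word]

theorem subst_ofFreeLie {Y : Type*} (f : Y → FreeLieAlgebra ℚ X) (u : FreeLieAlgebra ℚ Y) :
    subst f (ofFreeLie Y u) = ofFreeLie X (FreeLieAlgebra.lift ℚ f u) := by
  have : ((subst f : WordAlgebra Y →ₐ[ℚ] WordAlgebra X) : WordAlgebra Y →ₗ⁅ℚ⁆
      WordAlgebra X).comp (ofFreeLie Y) = (ofFreeLie X).comp (FreeLieAlgebra.lift ℚ f) := by
    ext x : 1
    simp [ofFreeLie_of, subst_word_of]
  exact LieHom.congr_fun this u

theorem subst_mem_fil {Y : Type*} (f : Y → FreeLieAlgebra ℚ X) {n : ℕ} {a : WordAlgebra Y}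
    (ha : a ∈ fil Y n) : subst f a ∈ fil X n := by
  suffices fil Y n ≤ (fil X n).comap (subst f).toLinearMap from this ha
  rw [fil, Submodule.span_le]
  rintro _ ⟨w, hw, rfl⟩
  refine fil_antitone hw ?_
  clear hw
  induction w using FreeMonoid.inductionOn' with
  | one => rw [word_one, FreeMonoid.length_one, fil_zero]; trivial
  | of_mul y w ih =>
    rw [word_mul, FreeMonoid.length_mul, FreeMonoid.length_of, AlgHom.toLinearMap_apply, map_mul,
      subst_word_of]
    exact fil_mul_mem (ofFreeLie_mem_fil _) ih

theorem exp_truncMap_bch (N : ℕ) (u v : FreeLieAlgebra ℚ X) :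
    IsNilpotent.exp (truncMap X N (ofFreeLie X (bch N u v))) =
      IsNilpotent.exp (truncMap X N (ofFreeLie X u)) *
        IsNilpotent.exp (truncMap X N (ofFreeLie X v)) := by
  obtain ⟨h, hh⟩ := exists_exp_truncMap_eq_mul N u v
  obtain ⟨k, hk⟩ := exists_exp_truncMap_eq_mul N (FreeLieAlgebra.of ℚ (0 : Fin 2))
    (FreeLieAlgebra.of ℚ 1)
  have hk := truncMap_eq_logMulExp hk
  rw [truncMap_eq, ofFreeLie_of, ofFreeLie_of] at hk
  have h1 := subst_mem_fil ![u, v] hk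
  have h2 := ofFreeLie_dynkinNorm_mem_fil ![u, v] hk
  rw [map_sub, map_logMulExp, subst_word_of, subst_word_of, subst_ofFreeLie, ← truncMap_eq] at h1
  rw [map_sub, map_sub, ← bch_eq_dynkinNorm, dynkinNorm_ofFreeLie, ← truncMap_eq, h1] at h2
  rw [← hh, truncMap_eq_logMulExp hh, ← h2]
  rfl

theorem lift_eq_of_exp_eq {N : ℕ} (hnil : LieModule.lowerCentralSeries ℚ L L N = ⊥) (f : X → L)
    {u v : FreeLieAlgebra ℚ X} (hh : IsNilpotent.exp (truncMap X N (ofFreeLie X u)) =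
      IsNilpotent.exp (truncMap X N (ofFreeLie X v))) :
    FreeLieAlgebra.lift ℚ f u = FreeLieAlgebra.lift ℚ f v := by
  have := dynkinNorm_eq_zero hnil f (truncMap_eq.1 (truncMap_eq_of_exp_eq hh))
  rwa [map_sub, dynkinNorm_ofFreeLie, dynkinNorm_ofFreeLie, sub_eq_zero] at this

theorem exp_neg_mul_exp_truncMap (N : ℕ) (u : FreeLieAlgebra ℚ X) :
    IsNilpotent.exp (truncMap X N (ofFreeLie X (-u))) *
      IsNilpotent.exp (truncMap X N (ofFreeLie X u)) = 1 := by
  have h := (truncFiltration X N).isNilpotent (truncMap_ofFreeLie_mem_fil N u)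
  rw [map_neg, map_neg, IsNilpotent.exp_neg_mul_exp_self h]

end WordAlgebra

theorem map_wordBracket {L' : Type*} [LieRing L'] [LieAlgebra ℚ L'] (g : L →ₗ⁅ℚ⁆ L')
    (l : List L) : g (wordBracket l) = wordBracket (l.map g) := by
  induction l with
  | nil => simp [wordBracket]
  | cons a l ih =>
    rcases eq_or_ne l [] with rfl | hl
    · rfl
    · rw [wordBracket_cons a hl, LieHom.map_lie, ih, List.map_cons, wordBracket_cons _ (by simpa)]

theorem map_bch {L' : Type*} [LieRing L'] [LieAlgebra ℚ L'] (g : L →ₗ⁅ℚ⁆ L') (N : ℕ) (x y : L) :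
    g (bch N x y) = bch N (g x) (g y) := by
  simp only [bch, map_sum, map_smul, dynkinTerm, map_wordBracket, List.map_flatten,
    List.map_map, Function.comp_def, List.map_append, List.map_replicate]

end Truncation

/-- In a nilpotent Lie algebra `L` over ℚ, the Baker-Campbell-Hausdorff
product makes `L` into a group, with identity `0` and inverse `x ↦ -x`. -/
theorem bch_group
    (N : ℕ) (hnil : LieModule.lowerCentralSeries ℚ L L N = ⊥) :
    (∀ x y z : L, bch N (bch N x y) z = bch N x (bch N y z)) ∧
    (∀ x : L, bch N x 0 = x) ∧
    (∀ x : L, bch N 0 x = x) ∧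
    (∀ x : L, bch N x (-x) = 0) ∧
    (∀ x : L, bch N (-x) x = 0) := by
  have exp_zero (N : ℕ) : IsNilpotent.exp (WordAlgebra.truncMap Unit N
      (WordAlgebra.ofFreeLie Unit 0)) = 1 := by
    rw [map_zero, map_zero, IsNilpotent.exp_zero]
  refine ⟨fun x y z => ?_, fun x => ?_, fun x => ?_, fun x => ?_, fun x => ?_⟩
  · let a : Fin 3 → FreeLieAlgebra ℚ (Fin 3) := FreeLieAlgebra.of ℚ
    have := WordAlgebra.lift_eq_of_exp_eq hnil ![x, y, z]
      (u := bch N (bch N (a 0) (a 1)) (a 2)) (v := bch N (a 0) (bch N (a 1) (a 2)))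
      (by simp only [WordAlgebra.exp_truncMap_bch, mul_assoc])
    simpa [map_bch, a] using this
  · have := WordAlgebra.lift_eq_of_exp_eq hnil (fun _ : Unit => x)
      (u := bch N (FreeLieAlgebra.of ℚ ()) 0) (v := FreeLieAlgebra.of ℚ ())
      (by rw [WordAlgebra.exp_truncMap_bch, exp_zero, mul_one])
    simpa [map_bch] using this
  · have := WordAlgebra.lift_eq_of_exp_eq hnil (fun _ : Unit => x)
      (u := bch N 0 (FreeLieAlgebra.of ℚ ())) (v := FreeLieAlgebra.of ℚ ())
      (by rw [WordAlgebra.exp_truncMap_bch, exp_zero, one_mul])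
    simpa [map_bch] using this
  · have := WordAlgebra.lift_eq_of_exp_eq hnil (fun _ : Unit => x)
      (u := bch N (FreeLieAlgebra.of ℚ ()) (-FreeLieAlgebra.of ℚ ())) (v := 0)
      (by
        have h := WordAlgebra.exp_neg_mul_exp_truncMap N (-FreeLieAlgebra.of ℚ ())
        rw [neg_neg] at h
        rw [WordAlgebra.exp_truncMap_bch, exp_zero, h])
    simpa [map_bch] using this
  · have := WordAlgebra.lift_eq_of_exp_eq hnil (fun _ : Unit => x)
      (u := bch N (-FreeLieAlgebra.of ℚ ()) (FreeLieAlgebra.of ℚ ())) (v := 0)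
      (by rw [WordAlgebra.exp_truncMap_bch, exp_zero, WordAlgebra.exp_neg_mul_exp_truncMap])
    simpa [map_bch] using this

end Paper
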